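/- Let n ∈ ℕ^d have pairwise relatively prime entries, κ ∈ ℤ^d, and let g ∈ {1,…,d} be such that n_i is odd for all i ≠ g. Define the Chebyshev variety C^{(2n)}_κ = { x ∈ [−1,1]^d : (−1)^{κ_1} T_{2n_1}(x_1) = … = (−1)^{κ_d} T_{2n_d}(x_d) }. Then C^{(2n)}_κ = ⋃_{u ∈ {−1,1}^d} ℓ^{(2n)}_{κ,u}([0,π)) = ⋃_{u ∈ {−1,1}^d, u_g = 1} ℓ^{(2n)}_{κ,u}([0,2π)). Moreover, for every M ⊆ {1,…,d} and r ∈ {0,1}: LC^{(2n)}_{κ,M,r} = { x ∈ F^d_M : (−1)^{κ_1}T_{2n_1}(x_1) = … = (−1)^{κ_d}T_{2n_d}(x_d) = (−1)^r }. -/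

import Mathlib

/-!
With `x j = cos (θ j)`, the quantity `(-1) ^ κ j * T_{2 n_j} (x j)` is `cos (2 n_j θ_j + κ_j π)`;
on the curve this is `cos (2 p[n] t)` for every `j` (`cheb_lc2`), so the curves lie in the variety.

Conversely, let `cos τ` be the common value at a point of the variety. Replacing `θ j` by `-θ j`
where necessary, `2 n_j θ_j = τ - κ_j π + 2 π m_j` with integers `m_j` (`exists_angle`). By the
Chinese remainder theorem some `l` satisfies `l ≡ m_j` modulo every `n_j`, and the parameter
`t = (τ + 2 π l) / (2 p[n])` then gives all the coordinates up to sign (`exists_lc2`).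
A shift of `t` by a multiple of `π` changes only signs (`lc2_add_int_mul_pi`), so `t` can be taken
in `[0, π)`. As `p_g[n]` is odd, one further shift by `π` flips `u_g`, which normalizes `u_g = 1`
on `[0, 2π)`.

The nodes are the points whose common value is `± 1`, i.e. where `2 n_j θ_j` is a multiple of `π`.
-/

open Real Set

/-- p[n] = ∏_{j=1}^d n_j. -/
def Pp {d : ℕ} (n : Fin d → ℕ) : ℕ := ∏ j, n j

/-- p_i[n] = ∏_{j ≠ i} n_j. -/
def Pc {d : ℕ} (n : Fin d → ℕ) (i : Fin d) : ℕ := ∏ j ∈ Finset.univ.erase i, n j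

/-- t^{(n)}_l = lπ/p[n]. -/
noncomputable def tn {d : ℕ} (n : Fin d → ℕ) (l : ℤ) : ℝ := (l : ℝ) * Real.pi / (Pp n : ℝ)

/-- t^{(2n)}_l = lπ/(2p[n]). -/
noncomputable def t2n {d : ℕ} (n : Fin d → ℕ) (l : ℤ) : ℝ :=
  (l : ℝ) * Real.pi / (2 * (Pp n : ℝ))

/-- The Lissajous curve ℓ^{(2n)}_{κ,u}. -/
noncomputable def lc2 {d : ℕ} (n : Fin d → ℕ) (κ : Fin d → ℤ) (u : Fin d → ℝ) (t : ℝ) :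
    Fin d → ℝ :=
  fun j => u j * Real.cos ((Pc n j : ℝ) * t - (κ j : ℝ) * Real.pi / (2 * (n j : ℝ)))

/-- The Lissajous curve ℓ^{(n)}_{κ,u}. -/
noncomputable def lc1 {d : ℕ} (n : Fin d → ℕ) (κ : Fin d → ℤ) (u : Fin d → ℝ) (t : ℝ) :
    Fin d → ℝ :=
  fun j => u j * Real.cos ((Pc n j : ℝ) * t - (κ j : ℝ) * Real.pi / (n j : ℝ))

/-- The index class I^{(2n)}_{κ,r}: 0 ≤ i_j ≤ 2n_j with i_j ≡ κ_j + r (mod 2). -/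
def I2R {d : ℕ} (n : Fin d → ℕ) (κ : Fin d → ℤ) (r : ℕ) : Set (Fin d → ℕ) :=
  {i | ∀ j, i j ≤ 2 * n j ∧ (i j : ℤ) ≡ κ j + (r : ℤ) [ZMOD 2]}

/-- I^{(2n)}_κ = I^{(2n)}_{κ,0} ∪ I^{(2n)}_{κ,1}. -/
def I2 {d : ℕ} (n : Fin d → ℕ) (κ : Fin d → ℤ) : Set (Fin d → ℕ) :=
  I2R n κ 0 ∪ I2R n κ 1

/-- The subclass I^{(2n)}_{κ,M,r}: indices in I^{(2n)}_{κ,r} with 0 < i_j < 2n_j exactly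
for j ∈ M. -/
def I2MR {d : ℕ} (n : Fin d → ℕ) (κ : Fin d → ℤ) (M : Finset (Fin d)) (r : ℕ) :
    Set (Fin d → ℕ) :=
  {i ∈ I2R n κ r | ∀ j, (0 < i j ∧ i j < 2 * n j) ↔ j ∈ M}

/-- I^{(2n)}_{κ,M} = I^{(2n)}_{κ,M,0} ∪ I^{(2n)}_{κ,M,1}. -/
def I2M {d : ℕ} (n : Fin d → ℕ) (κ : Fin d → ℤ) (M : Finset (Fin d)) : Set (Fin d → ℕ) :=
  I2MR n κ M 0 ∪ I2MR n κ M 1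

/-- The Chebyshev polynomial of the first kind, as a function: T_m(cos θ) = cos(mθ). -/
noncomputable def Tch (m : ℕ) (x : ℝ) : ℝ := (Polynomial.Chebyshev.T ℝ (m : ℤ)).eval x

/-- The multivariate Chebyshev–Gauß–Lobatto point z^{(2n)}_i. -/
noncomputable def zv2 {d : ℕ} (n : Fin d → ℕ) (i : Fin d → ℕ) : Fin d → ℝ :=
  fun j => Real.cos ((i j : ℝ) * Real.pi / (2 * (n j : ℝ)))

/-- The node class LC^{(2n)}_{κ,M,r} = {z^{(2n)}_i : i ∈ I^{(2n)}_{κ,M,r}}. -/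
noncomputable def LC2MR {d : ℕ} (n : Fin d → ℕ) (κ : Fin d → ℤ) (M : Finset (Fin d))
    (r : ℕ) : Set (Fin d → ℝ) :=
  {x | ∃ i ∈ I2MR n κ M r, x = zv2 n i}

/-- The face set F^d_M of the cube [−1,1]^d. -/
def Fface (d : ℕ) (M : Finset (Fin d)) : Set (Fin d → ℝ) :=
  {x | (∀ i ∈ M, -1 < x i ∧ x i < 1) ∧ (∀ i ∉ M, x i = -1 ∨ x i = 1)}

/-! ### Chebyshev values along the curves -/

theorem Pc_mul {d : ℕ} (n : Fin d → ℕ) (j : Fin d) : (Pc n j : ℝ) * n j = Pp n := by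
  unfold Pc Pp
  exact_mod_cast Finset.prod_erase_mul _ _ (Finset.mem_univ j)

theorem cheb_cos (m : ℕ) (k : ℤ) (θ : ℝ) :
    (-1 : ℝ) ^ k * Tch (2 * m) (Real.cos θ) = Real.cos (2 * m * θ + k * Real.pi) := by
  rw [Real.cos_add_int_mul_pi, Tch, Polynomial.Chebyshev.T_real_cos]
  push_cast
  rfl

theorem sign_mul_cos {u : ℝ} (hu : u = 1 ∨ u = -1) (φ : ℝ) :
    ∃ k : ℤ, u * Real.cos φ = Real.cos (φ + k * Real.pi) := by
  rcases hu with rfl | rfl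
  · exact ⟨0, by simp⟩
  · exact ⟨1, by simp⟩

/-- The common value of the Chebyshev expressions along a Lissajous curve. -/
theorem cheb_lc2 {d : ℕ} (n : Fin d → ℕ) (hn : ∀ j, 0 < n j) (κ : Fin d → ℤ) (u : Fin d → ℝ)
    (hu : ∀ j, u j = 1 ∨ u j = -1) (t : ℝ) (j : Fin d) :
    (-1 : ℝ) ^ (κ j) * Tch (2 * n j) (lc2 n κ u t j) = Real.cos (2 * Pp n * t) := by
  obtain ⟨k, hk⟩ := sign_mul_cos (hu j) ((Pc n j : ℝ) * t - (κ j : ℝ) * Real.pi / (2 * (n j : ℝ)))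
  have h0 : (n j : ℝ) ≠ 0 := by exact_mod_cast (hn j).ne'
  rw [lc2, hk, cheb_cos, ← Pc_mul n j, ← Real.cos_add_int_mul_two_pi _ (-((n j : ℤ) * k))]
  congr 1
  push_cast
  field_simp
  ring

theorem lc2_mem {d : ℕ} (n : Fin d → ℕ) (κ : Fin d → ℤ) (u : Fin d → ℝ)
    (hu : ∀ j, u j = 1 ∨ u j = -1) (t : ℝ) (j : Fin d) :
    lc2 n κ u t j ∈ Set.Icc (-1 : ℝ) 1 := by
  obtain ⟨k, hk⟩ := sign_mul_cos (hu j) ((Pc n j : ℝ) * t - (κ j : ℝ) * Real.pi / (2 * (n j : ℝ)))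
  rw [lc2, hk]
  exact Real.cos_mem_Icc _

theorem lc2_add_int_mul_pi {d : ℕ} (n : Fin d → ℕ) (κ : Fin d → ℤ) (u : Fin d → ℝ) (t : ℝ)
    (k : ℤ) :
    lc2 n κ u (t + k * Real.pi) = lc2 n κ (fun j => u j * (-1) ^ ((Pc n j : ℤ) * k)) t := by
  funext j
  simp only [lc2]
  rw [mul_assoc, ← Real.cos_add_int_mul_pi]
  congr 2
  push_cast
  ring

theorem sign_mul_zpow {u : ℝ} (hu : u = 1 ∨ u = -1) (k : ℤ) :
    u * (-1) ^ k = 1 ∨ u * (-1) ^ k = -1 := by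
  rcases hu with rfl | rfl <;> rcases Int.even_or_odd k with h | h <;>
    simp [h.neg_one_zpow]

/-! ### Points of the variety lie on the curves -/

/-- A point with Chebyshev value `cos τ` has an angle, of suitable sign, that solves the
corresponding congruence for `τ` itself rather than for `± τ`. -/
theorem exists_angle {m : ℕ} {k : ℤ} {x τ : ℝ} (hx : x ∈ Set.Icc (-1 : ℝ) 1)
    (h : (-1 : ℝ) ^ k * Tch (2 * m) x = Real.cos τ) :
    ∃ (l : ℤ) (θ : ℝ), Real.cos θ = x ∧
      2 * m * θ = τ - k * Real.pi + 2 * Real.pi * l := by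
  have hc := Real.cos_arccos hx.1 hx.2
  rw [← hc, cheb_cos, Real.cos_eq_cos_iff] at h
  obtain ⟨a, ha | ha⟩ := h
  · refine ⟨-a, Real.arccos x, hc, ?_⟩
    push_cast
    linarith
  · refine ⟨k - a, -Real.arccos x, by rw [Real.cos_neg, hc], ?_⟩
    push_cast
    linarith

/-- Membership in the variety for a given common value `cos τ` produces a sign vector and a
parameter in `[0, π)`, by the Chinese remainder theorem. -/
theorem exists_lc2 {d : ℕ} (n : Fin d → ℕ) (hn : ∀ j, 0 < n j)
    (hcop : ∀ i j, i ≠ j → Nat.Coprime (n i) (n j)) (κ : Fin d → ℤ) (x : Fin d → ℝ) (τ : ℝ)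
    (hx : ∀ j, x j ∈ Set.Icc (-1 : ℝ) 1)
    (h : ∀ j, (-1 : ℝ) ^ (κ j) * Tch (2 * n j) (x j) = Real.cos τ) :
    ∃ u : Fin d → ℝ, (∀ j, u j = 1 ∨ u j = -1) ∧
      ∃ t ∈ Set.Ico (0 : ℝ) Real.pi, x = lc2 n κ u t := by
  choose m θ hθ hm using fun j => exists_angle (hx j) (h j)
  obtain ⟨l, hl⟩ := Nat.chineseRemainderOfFinset (fun j => (m j % n j).toNat) n Finset.univ
    (fun j _ => (hn j).ne') (fun i _ j _ hij => hcop i j hij)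
  have hdvd : ∀ j, ∃ q : ℤ, (l : ℤ) = m j + n j * q := by
    intro j
    have h1 := Int.natCast_modEq_iff.2 (hl j (Finset.mem_univ j))
    have hpos : (n j : ℤ) ≠ 0 := by exact_mod_cast (hn j).ne'
    rw [Int.toNat_of_nonneg (Int.emod_nonneg _ hpos)] at h1
    obtain ⟨q, hq⟩ := (h1.trans (Int.mod_modEq _ _)).symm.dvd
    exact ⟨q, by linarith⟩
  choose q hq using hdvd
  have hP : (Pp n : ℝ) ≠ 0 := by
    exact_mod_cast (Finset.prod_pos fun j _ => hn j).ne'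
  set t : ℝ := (τ + 2 * Real.pi * l) / (2 * Pp n) with ht
  have hphase : ∀ j, (Pc n j : ℝ) * t - (κ j : ℝ) * Real.pi / (2 * (n j : ℝ))
      = θ j + q j * Real.pi := by
    intro j
    have h0 : (n j : ℝ) ≠ 0 := by exact_mod_cast (hn j).ne'
    have hl' : (l : ℝ) = m j + n j * q j := by exact_mod_cast hq j
    have hθ' : θ j = (τ - κ j * Real.pi + 2 * Real.pi * m j) / (2 * n j) := by
      rw [← hm j]; field_simp
    have hc : (Pc n j : ℝ) ≠ 0 := by
      intro hc
      exact hP (by rw [← Pc_mul n j, hc, zero_mul])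
    rw [ht, ← Pc_mul n j, hθ', hl']
    field_simp
    ring
  have hsign : ∀ j, (-1 : ℝ) ^ (q j) * (-1) ^ (q j) = 1 := fun j => by
    rw [← mul_zpow]; simp
  have hxt : x = lc2 n κ (fun j => (-1) ^ (q j)) t := by
    funext j
    simp only [lc2]
    rw [hphase, Real.cos_add_int_mul_pi, hθ, ← mul_assoc, hsign, one_mul]
  obtain ⟨k, hk, -⟩ := existsUnique_add_zsmul_mem_Ico Real.pi_pos t 0
  refine ⟨fun j => (-1) ^ (q j) * (-1) ^ ((Pc n j : ℤ) * -k), fun j => ?_, t + k • Real.pi,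
    by simpa using hk, ?_⟩
  · exact sign_mul_zpow (by simpa using sign_mul_zpow (Or.inl rfl) (q j)) _
  · rw [← lc2_add_int_mul_pi, hxt]
    congr 1
    simp

/-! ### Nodes -/

/-- The coordinatewise description of the nodes: Chebyshev value `(-1) ^ r` means that the angle is
a multiple of `π / (2 m)`, with a factor of parity `k + r`. -/
theorem exists_node {m : ℕ} (h_m : 0 < m) {k : ℤ} {r : ℕ} {x : ℝ} (hx : x ∈ Set.Icc (-1 : ℝ) 1)
    (h : (-1 : ℝ) ^ k * Tch (2 * m) x = (-1) ^ r) :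
    ∃ i : ℕ, (i ≤ 2 * m ∧ (i : ℤ) ≡ k + (r : ℤ) [ZMOD 2]) ∧
      x = Real.cos (i * Real.pi / (2 * m)) := by
  have h0 : (0 : ℝ) < m := by exact_mod_cast h_m
  have hc := Real.cos_arccos hx.1 hx.2
  have hp := Real.pi_pos
  have h' : (-1 : ℝ) ^ k * Tch (2 * m) x = Real.cos (r * Real.pi) := by
    rw [h, Real.cos_nat_mul_pi]
  rw [← hc, cheb_cos, Real.cos_eq_cos_iff] at h'
  obtain ⟨i, hi, hpar⟩ : ∃ i : ℤ, 2 * m * Real.arccos x = i * Real.pi ∧ i ≡ k + r [ZMOD 2] := by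
    obtain ⟨a, ha | ha⟩ := h'
    · refine ⟨r - k - 2 * a, by push_cast; linarith, ?_⟩
      unfold Int.ModEq; omega
    · refine ⟨2 * a - r - k, by push_cast; linarith, ?_⟩
      unfold Int.ModEq; omega
  have hi0 : 0 ≤ i := by
    have : (0 : ℝ) ≤ i * Real.pi := by
      rw [← hi]; have := Real.arccos_nonneg x; positivity
    exact_mod_cast nonneg_of_mul_nonneg_left this hp
  have hi1 : i ≤ 2 * m := by
    have : (i : ℝ) * Real.pi ≤ (2 * m) * Real.pi := by
      rw [← hi]; gcongr; exact Real.arccos_le_pi x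
    exact_mod_cast le_of_mul_le_mul_right this hp
  lift i to ℕ using hi0
  refine ⟨i, ⟨by exact_mod_cast hi1, hpar⟩, ?_⟩
  rw [← hc]
  congr 1
  rw [eq_div_iff (by positivity)]
  push_cast at hi
  linarith

theorem cheb_node {m : ℕ} (h_m : 0 < m) {k : ℤ} {r i : ℕ}
    (h : (i : ℤ) ≡ k + (r : ℤ) [ZMOD 2]) :
    (-1 : ℝ) ^ k * Tch (2 * m) (Real.cos (i * Real.pi / (2 * m))) = (-1) ^ r := by
  have h0 : (m : ℝ) ≠ 0 := by exact_mod_cast h_m.ne'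
  obtain ⟨q, hq⟩ := h.dvd
  have hi : (i : ℝ) + k = r + 2 * (k - q) := by
    have : (i : ℤ) + k = r + 2 * (k - q) := by linarith
    exact_mod_cast this
  rw [cheb_cos, ← Real.cos_nat_mul_pi, ← Real.cos_add_int_mul_two_pi _ (q - k)]
  congr 1
  push_cast
  field_simp
  linear_combination hi

/-- A node coordinate lies in the open interval iff its index is strictly between the ends. -/
theorem node_interior {m : ℕ} (h_m : 0 < m) {i : ℕ} (hi : i ≤ 2 * m) :
    (-1 < Real.cos (i * Real.pi / (2 * m)) ∧ Real.cos (i * Real.pi / (2 * m)) < 1) ↔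
      (0 < i ∧ i < 2 * m) := by
  have h0 : (0 : ℝ) < m := by exact_mod_cast h_m
  have hp := Real.pi_pos
  constructor
  · rintro ⟨h1, h2⟩
    constructor
    · rcases Nat.eq_zero_or_pos i with rfl | h
      · simp at h2
      · exact h
    · refine lt_of_le_of_ne hi ?_
      rintro rfl
      have : ((2 * m : ℕ) : ℝ) * Real.pi / (2 * m) = Real.pi := by push_cast; field_simp
      rw [this, Real.cos_pi] at h1
      exact lt_irrefl _ h1
  · rintro ⟨h1, h2⟩
    have h1' : (0 : ℝ) < i := by exact_mod_cast h1
    have h2' : (i : ℝ) < 2 * m := by exact_mod_cast h2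
    have hpos : 0 < i * Real.pi / (2 * m) := by positivity
    have hlt : i * Real.pi / (2 * m) < Real.pi := by
      rw [div_lt_iff₀ (by positivity)]; nlinarith
    constructor
    · rw [← Real.cos_pi]
      exact Real.cos_lt_cos_of_nonneg_of_le_pi hpos.le le_rfl hlt
    · rw [← Real.cos_zero]
      exact Real.cos_lt_cos_of_nonneg_of_le_pi le_rfl hlt.le hpos

/-! ### The parametrization theorem -/

theorem odd_Pc {d : ℕ} (n : Fin d → ℕ) (g : Fin d) (hg : ∀ j, j ≠ g → Odd (n j)) :
    Odd (Pc n g) :=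
  Finset.prod_induction n Odd (fun _ _ => Odd.mul) odd_one
    fun j hj => hg j (Finset.ne_of_mem_erase hj)

/-- Theorem 3.3: the Chebyshev variety C^{(2n)}_κ is the union of the images of the
Lissajous curves ℓ^{(2n)}_{κ,u} on [0,π) over all sign vectors u, and also the union over
all u with u_g = 1 of the images on [0,2π); moreover LC^{(2n)}_{κ,M,r} consists of the
points of F^d_M with all (−1)^{κ_i} T_{2n_i}(x_i) equal to (−1)^r. -/
theorem stmt_16 {d : ℕ} (hd : 0 < d) (n : Fin d → ℕ) (hn : ∀ j, 0 < n j)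
    (hcop : ∀ i j, i ≠ j → Nat.Coprime (n i) (n j))
    (κ : Fin d → ℤ) (g : Fin d) (hg : ∀ j, j ≠ g → Odd (n j))
    (C : Set (Fin d → ℝ))
    (hC : C = {x | (∀ j, x j ∈ Set.Icc (-1 : ℝ) 1) ∧
      ∀ i j, (-1 : ℝ) ^ (κ i) * Tch (2 * n i) (x i) =
        (-1 : ℝ) ^ (κ j) * Tch (2 * n j) (x j)}) :
    (C = {x | ∃ u : Fin d → ℝ, (∀ j, u j = 1 ∨ u j = -1) ∧
      ∃ t ∈ Set.Ico (0 : ℝ) Real.pi, x = lc2 n κ u t}) ∧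
    (C = {x | ∃ u : Fin d → ℝ, (∀ j, u j = 1 ∨ u j = -1) ∧ u g = 1 ∧
      ∃ t ∈ Set.Ico (0 : ℝ) (2 * Real.pi), x = lc2 n κ u t}) ∧
    (∀ (M : Finset (Fin d)) (r : ℕ), r ≤ 1 →
      LC2MR n κ M r = {x ∈ Fface d M |
        ∀ i, (-1 : ℝ) ^ (κ i) * Tch (2 * n i) (x i) = (-1 : ℝ) ^ r}) := by
  have hsub : ∀ u : Fin d → ℝ, (∀ j, u j = 1 ∨ u j = -1) → ∀ t, lc2 n κ u t ∈ C := by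
    intro u hu t
    rw [hC]
    exact ⟨lc2_mem n κ u hu t, fun i j => by
      rw [cheb_lc2 n hn κ u hu, cheb_lc2 n hn κ u hu]⟩
  have hsup : ∀ x ∈ C, ∃ u : Fin d → ℝ, (∀ j, u j = 1 ∨ u j = -1) ∧
      ∃ t ∈ Set.Ico (0 : ℝ) Real.pi, x = lc2 n κ u t := by
    intro x hx
    rw [hC] at hx
    refine exists_lc2 n hn hcop κ x (2 * n g * Real.arccos (x g) + κ g * Real.pi) hx.1
      fun j => ?_
    rw [hx.2 j g, ← cheb_cos, Real.cos_arccos (hx.1 g).1 (hx.1 g).2]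
  refine ⟨?_, ?_, ?_⟩
  · ext x
    refine ⟨hsup x, ?_⟩
    rintro ⟨u, hu, t, -, rfl⟩
    exact hsub u hu t
  · ext x
    constructor
    · intro hx
      obtain ⟨u, hu, t, ht, rfl⟩ := hsup x hx
      rcases hu g with hug | hug
      · exact ⟨u, hu, hug, t, ⟨ht.1, by linarith [ht.2, Real.pi_pos]⟩, rfl⟩
      -- The shift by `π` multiplies `u g` by `(-1) ^ p_g[n] = -1`.
      · refine ⟨fun j => u j * (-1) ^ ((Pc n j : ℤ) * -1), fun j => sign_mul_zpow (hu j) _, ?_,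
          t + Real.pi, ⟨by linarith [ht.1, Real.pi_pos], by linarith [ht.2]⟩, ?_⟩
        · have hodd : Odd ((Pc n g : ℤ) * -1) := by
            simpa using odd_Pc n g hg
          simp only [hug, hodd.neg_one_zpow]
          norm_num
        · rw [← lc2_add_int_mul_pi]
          congr 1
          push_cast
          ring
    · rintro ⟨u, hu, -, t, -, rfl⟩
      exact hsub u hu t
  · intro M r _
    ext x
    constructor
    · rintro ⟨i, ⟨hi, hM⟩, rfl⟩
      have hint := fun j => (node_interior (hn j) (hi j).1).trans (hM j)
      refine ⟨⟨fun j hj => (hint j).2 hj, fun j hj => ?_⟩, fun j => cheb_node (hn j) (hi j).2⟩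
      have hnot := mt (hint j).1 hj
      rcases (Real.neg_one_le_cos (i j * Real.pi / (2 * n j))).eq_or_lt with h | h
      · exact Or.inl h.symm
      · exact Or.inr (le_antisymm (Real.cos_le_one _) (not_lt.1 fun h' => hnot ⟨h, h'⟩))
    · rintro ⟨⟨hin, hout⟩, hval⟩
      have hx : ∀ j, x j ∈ Set.Icc (-1 : ℝ) 1 := by
        intro j
        by_cases hj : j ∈ M
        · exact ⟨(hin j hj).1.le, (hin j hj).2.le⟩
        · rcases hout j hj with h | h <;> rw [h] <;> constructor <;> norm_num
      choose i hi hxi using fun j => exists_node (hn j) (hx j) (hval j)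
      refine ⟨i, ⟨hi, fun j => ?_⟩, funext hxi⟩
      rw [← node_interior (hn j) (hi j).1, ← hxi j]
      refine ⟨fun h => ?_, hin j⟩
      by_contra hj
      rcases hout j hj with h' | h' <;> rw [h'] at h
      · exact lt_irrefl _ h.1
      · exact lt_irrefl _ h.2
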